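/- For every integer N ≥ 2, every real p > 1, all positive reals f, F with f^p ≤ F, and every κ with 0 < κ ≤ c(N,p)·(f^p/F)^{1/(p−1)}, one has D_p(F,f,κ) = κ·(F/f)^{p/(p−1)}, where D_p(F,f,κ) := inf { sup_{E measurable, μ(E)=κ} ∫_E (M_N φ)^p dμ : φ ≥ 0 measurable on [0,1), ∫ φ dμ = f, ∫ φ^p dμ = F }. -/

import Mathlib

open MeasureTheory Set Filter

/-- The `N`-adic interval `[k/N^m, (k+1)/N^m)` at level `m`. -/
def adicItv (N m k : ℕ) : Set ℝ :=
  Set.Ico ((k : ℝ) / (N : ℝ) ^ m) (((k : ℝ) + 1) / (N : ℝ) ^ m)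

/-- The average `(1/μ(I)) ∫_I |φ| dμ` of `φ` over the `N`-adic interval at level `m`, index `k`
(its measure is `N^{-m}`). -/
noncomputable def adicAvg (N : ℕ) (φ : ℝ → ℝ) (m k : ℕ) : ℝ :=
  (N : ℝ) ^ m * ∫ y in adicItv N m k, |φ y|

/-- The `N`-adic maximal operator on `[0,1)`:
`M_N φ(x) = sup { (1/μ(I)) ∫_I |φ| dμ : x ∈ I, I an N-adic interval }`. -/
noncomputable def adicMax (N : ℕ) (φ : ℝ → ℝ) (x : ℝ) : ℝ :=
  sSup {r : ℝ | ∃ m k : ℕ, k < N ^ m ∧ x ∈ adicItv N m k ∧ r = adicAvg N φ m k}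

/-- `sup { ∫_E (M_N φ)^p dμ : E ⊆ [0,1) measurable, μ(E) = κ }`. -/
noncomputable def supMeas (N : ℕ) (p κ : ℝ) (φ : ℝ → ℝ) : ℝ :=
  sSup {z : ℝ | ∃ E : Set ℝ, MeasurableSet E ∧ E ⊆ Set.Ico (0:ℝ) 1 ∧
    volume E = ENNReal.ofReal κ ∧ z = ∫ x in E, adicMax N φ x ^ p}

/-- The Bellman function `D_p(F,f,κ)`: the infimum of
`sup { ∫_E (M_N φ)^p dμ : μ(E) = κ }` over all nonnegative measurable `φ` on `[0,1)`
with `∫ φ dμ = f` and `∫ φ^p dμ = F`. -/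
noncomputable def Dp (N : ℕ) (p F f κ : ℝ) : ℝ :=
  sInf {y : ℝ | ∃ φ : ℝ → ℝ, Measurable φ ∧ (∀ x ∈ Set.Ico (0:ℝ) 1, 0 ≤ φ x) ∧
    (∫ x in Set.Ico (0:ℝ) 1, φ x) = f ∧ (∫ x in Set.Ico (0:ℝ) 1, φ x ^ p) = F ∧
    y = supMeas N p κ φ}

/-!
The averages of `φ` over the `N`-adic intervals form a nonnegative martingale `X n` whose supremum
is the maximal function and which grows by a factor of at most `N` per step. Let `S n` be its
running maximum, started at a level `L`. The integral of `S n ^ p - a * S n ^ (p - 1) * X n` changes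
only when the maximum moves. By convexity of `t ↦ t ^ p` on `[1, N]` it is nondecreasing in `n` for
`a = (N ^ p - 1) / (N ^ p - N)`, and by Young's inequality it is nonincreasing for `a = p / (p - 1)`
(Doob's inequality).

Nonincrease makes the `p`-th power of the maximal function integrable. Then `n → ∞` in the
nondecreasing case, with `L` the level such that a superlevel set `E` of the maximal function at `L`
has measure `κ`, bounds its integral over `E` from below. For small `κ`, Young's inequality removes
`L` from this bound and leaves `κ * A ^ p`, where `A ^ (p - 1) = F / f`. The function `A` times the
indicator of `[0, f / A)` attains it, because its maximal function is at most `A`.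
-/

section RealInequalities

variable {p R a s x y : ℝ}

lemma rpow_sub_one_mul_self (hp : 1 < p) (hx : 0 ≤ x) : x ^ (p - 1) * x = x ^ p := by
  rw [← Real.rpow_add_one' hx (by linarith), sub_add_cancel]

lemma mul_rpow_sub_one_mul_le (hp : 1 < p) (hx : 0 ≤ x) (hy : 0 ≤ y) :
    p * (x ^ (p - 1) * y) ≤ (p - 1) * x ^ p + y ^ p := by
  have : 0 < p := by linarith
  have hp1 : 0 < p - 1 := by linarith
  have young := Real.young_inequality_of_nonneg (Real.rpow_nonneg hx (p - 1)) hy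
    (Real.HolderConjugate.conjExponent hp).symm
  rw [Real.conjExponent, ← Real.rpow_mul hx, mul_div_cancel₀ _ hp1.ne'] at young
  calc p * (x ^ (p - 1) * y) ≤ p * (x ^ p / (p / (p - 1)) + y ^ p / p) := by gcongr
    _ = (p - 1) * x ^ p + y ^ p := by field_simp

lemma rpow_sub_one_mul_le_add (hp : 1 < p) (hx : 0 ≤ x) (hy : 0 ≤ y) :
    x ^ (p - 1) * y ≤ x ^ p + y ^ p := by
  nlinarith [mul_rpow_sub_one_mul_le hp hx hy, Real.rpow_nonneg hx p, Real.rpow_nonneg hy p,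
    mul_nonneg (Real.rpow_nonneg hx (p - 1)) hy]

lemma mul_rpow_sub_one_mul_sub_le (hp : 1 < p) (hx : 0 ≤ x) (hy : 0 ≤ y) :
    (p - 1) * (x ^ p - y ^ p) ≤ p * ((x ^ (p - 1) - y ^ (p - 1)) * x) := by
  rw [sub_mul (x ^ (p - 1)), rpow_sub_one_mul_self hp hx]
  linarith [mul_rpow_sub_one_mul_le hp hy hx]

lemma rpow_le_secant (hp : 1 < p) (hx : 1 ≤ x) (hxR : x ≤ R) (hR : 1 < R) :
    x ^ p ≤ 1 + (x - 1) * ((R ^ p - 1) / (R - 1)) := by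
  obtain rfl | hx1 := hx.eq_or_lt
  · simp
  have slope_le := (convexOn_rpow hp.le).secant_mono (a := 1) (x := x) (y := R)
    (mem_Ici.2 zero_le_one) (mem_Ici.2 (by linarith)) (mem_Ici.2 (by linarith))
    hx1.ne' hR.ne' hxR
  rw [Real.one_rpow, div_le_iff₀ (by linarith)] at slope_le
  linarith

/-- The constant `(R ^ p - 1) / (R ^ p - R)` attached to martingales that grow by a factor of at
most `R` in each step. -/
noncomputable def regularConst (R p : ℝ) : ℝ := (R ^ p - 1) / (R ^ p - R)

lemma regularConst_pos (hR : 1 < R) (hp : 1 < p) : 0 < regularConst R p := by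
  have := Real.self_lt_rpow_of_one_lt hR hp
  exact div_pos (by linarith) (by linarith)

lemma regularConst_sub_one (hR : 1 < R) (hp : 1 < p) :
    regularConst R p - 1 = (R - 1) / (R ^ p - R) := by
  have : R ^ p - R ≠ 0 := (sub_pos.2 (Real.self_lt_rpow_of_one_lt hR hp)).ne'
  rw [regularConst, div_sub_one this]
  ring

lemma mul_regularConst_lt_one (hR : 1 < R) (hp : 1 < p) : (p - 1) / p * regularConst R p < 1 := by
  have bernoulli := one_add_mul_self_lt_rpow_one_add (s := R - 1) (by linarith) (by linarith) hp
  rw [add_sub_cancel] at bernoulli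
  have : 0 < p := by linarith
  have : 0 < R ^ p - R := sub_pos.2 (Real.self_lt_rpow_of_one_lt hR hp)
  rw [regularConst, div_mul_div_comm, div_lt_one (by positivity)]
  linarith

/-- The function `s ^ p - a * s ^ (p - 1) * x` of a running maximum `s` and a current value `x`,
whose expectation along a martingale is monotone or antitone for suitable `a`. -/
noncomputable def potential (p a s x : ℝ) : ℝ := s ^ p - a * (s ^ (p - 1) * x)

lemma potential_self (hp : 1 < p) (hx : 0 ≤ x) : potential p a x x = (1 - a) * x ^ p := by
  rw [potential, rpow_sub_one_mul_self hp hx]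
  ring

lemma abs_potential_le (hp : 1 < p) (hx : 0 ≤ x) (hxs : x ≤ s) :
    |potential p a s x| ≤ (1 + |a|) * s ^ p := by
  have hs : 0 ≤ s := hx.trans hxs
  have hsp : 0 ≤ s ^ p := Real.rpow_nonneg hs p
  have mixed_nonneg : 0 ≤ s ^ (p - 1) * x := mul_nonneg (Real.rpow_nonneg hs _) hx
  have mixed_le : s ^ (p - 1) * x ≤ s ^ p := by
    rw [← rpow_sub_one_mul_self hp hs]
    gcongr
  calc |potential p a s x| ≤ |s ^ p| + |a| * |s ^ (p - 1) * x| := by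
        rw [← abs_mul]; exact abs_sub _ _
    _ ≤ s ^ p + |a| * s ^ p := by rw [abs_of_nonneg hsp, abs_of_nonneg mixed_nonneg]; gcongr
    _ = (1 + |a|) * s ^ p := by ring

lemma potential_le_sub (hp : 1 < p) (ha : 0 ≤ a) (hx : 0 ≤ x) (hxs : x ≤ s) :
    potential p a s x ≤ s ^ p - a * x ^ p := by
  have : 0 ≤ p - 1 := by linarith
  rw [potential, ← rpow_sub_one_mul_self hp hx]
  gcongr

lemma potential_max_le (hp : 1 < p) (hs : 0 ≤ s) (hx : 0 ≤ x) :
    potential p (p / (p - 1)) (max s x) x ≤ potential p (p / (p - 1)) s x := by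
  obtain hxs | hsx := le_total x s
  · rw [max_eq_left hxs]
  have hp1 : 0 < p - 1 := by linarith
  have young := div_le_div_of_nonneg_right (mul_rpow_sub_one_mul_le hp hs hx) hp1.le
  rw [max_eq_right hsx, potential_self hp hx, potential]
  calc (1 - p / (p - 1)) * x ^ p
      = s ^ p - ((p - 1) * s ^ p + x ^ p) / (p - 1) := by field_simp; ring
    _ ≤ s ^ p - p * (s ^ (p - 1) * x) / (p - 1) := by linarith
    _ = s ^ p - p / (p - 1) * (s ^ (p - 1) * x) := by ring

lemma half_rpow_sub_le_potential (hp : 1 < p) (hs : 0 ≤ s) (hx : 0 ≤ x) :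
    s ^ p / 2 - 2 ^ p / (p - 1) / 2 * x ^ p ≤ potential p (p / (p - 1)) s x := by
  have hp1 : 0 < p - 1 := by linarith
  have young := mul_rpow_sub_one_mul_le hp hs (mul_nonneg zero_le_two hx)
  rw [Real.mul_rpow zero_le_two hx] at young
  rw [potential]
  field_simp
  linarith

lemma potential_le_max (hp : 1 < p) (hR : 1 < R) (hs : 0 < s) (hx : x ≤ R * s) :
    potential p (regularConst R p) s x ≤ potential p (regularConst R p) (max s x) x := by
  obtain hxs | hsx := le_total x s
  · rw [max_eq_left hxs]
  have hx0 : 0 ≤ x := hs.le.trans hsx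
  have secant := rpow_le_secant hp ((one_le_div hs).2 hsx) ((div_le_iff₀ hs).2 hx) hR
  have normalized : (regularConst R p - 1) * (x / s) ^ p ≤ regularConst R p * (x / s) - 1 := by
    have hR1 : 0 < R - 1 := by linarith
    have hRp : 0 < R ^ p - R := sub_pos.2 (Real.self_lt_rpow_of_one_lt hR hp)
    rw [regularConst_sub_one hR hp, regularConst]
    calc (R - 1) / (R ^ p - R) * (x / s) ^ p
        ≤ (R - 1) / (R ^ p - R) * (1 + (x / s - 1) * ((R ^ p - 1) / (R - 1))) := by gcongr
      _ = (R ^ p - 1) / (R ^ p - R) * (x / s) - 1 := by field_simp; ring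
  have rescaled := mul_le_mul_of_nonneg_left normalized (Real.rpow_nonneg hs.le p)
  rw [Real.div_rpow hx0 hs.le] at rescaled
  rw [max_eq_right hsx, potential_self hp hx0, potential]
  have hsp : s ^ (p - 1) * s = s ^ p := rpow_sub_one_mul_self hp hs.le
  calc s ^ p - regularConst R p * (s ^ (p - 1) * x)
      = -(s ^ p * (regularConst R p * (x / s) - 1)) := by rw [← hsp]; field_simp; ring
    _ ≤ -(s ^ p * ((regularConst R p - 1) * (x ^ p / s ^ p))) := neg_le_neg rescaled
    _ = (1 - regularConst R p) * x ^ p := by field_simp; ring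

end RealInequalities

section Martingales

open scoped Topology

variable {Ω : Type*} {m0 : MeasurableSpace Ω} {μ : Measure Ω} {ℱ : Filtration ℕ m0}
  {X : ℕ → Ω → ℝ} {p L R a C : ℝ}

/-- The running maximum `max (L, X 0, …, X n)` of a process, started at the level `L`. -/
noncomputable def runningMax (X : ℕ → Ω → ℝ) (L : ℝ) (n : ℕ) (ω : Ω) : ℝ :=
  max L (partialSups (fun k => X k ω) n)

lemma runningMax_zero (ω : Ω) : runningMax X L 0 ω = max L (X 0 ω) := by
  rw [runningMax, partialSups_zero]

lemma runningMax_succ (n : ℕ) (ω : Ω) :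
    runningMax X L (n + 1) ω = max (runningMax X L n ω) (X (n + 1) ω) := by
  rw [runningMax, runningMax, partialSups_add_one, max_assoc]

lemma level_le_runningMax (n : ℕ) (ω : Ω) : L ≤ runningMax X L n ω := le_max_left _ _

lemma le_runningMax (n : ℕ) (ω : Ω) : X n ω ≤ runningMax X L n ω :=
  (le_partialSups (fun k => X k ω) n).trans (le_max_right _ _)

lemma runningMax_le_max_iSup {ω : Ω} (hω : BddAbove (range fun n => X n ω)) (n : ℕ) :
    runningMax X L n ω ≤ max L (⨆ n, X n ω) :=
  max_le_max_left L (partialSups_le _ _ _ fun k _ => le_ciSup hω k)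

lemma tendsto_runningMax {ω : Ω} (hω : BddAbove (range fun n => X n ω)) :
    Tendsto (fun n => runningMax X L n ω) atTop (𝓝 (max L (⨆ n, X n ω))) := by
  rw [← ciSup_partialSups_eq hω]
  exact tendsto_const_nhds.max <|
    tendsto_atTop_ciSup (partialSups (fun k => X k ω)).monotone (bddAbove_range_partialSups.2 hω)

lemma stronglyMeasurable_runningMax (hX : StronglyAdapted ℱ X) (n : ℕ) :
    StronglyMeasurable[ℱ n] (runningMax X L n) := by
  induction n with
  | zero =>
    rw [funext runningMax_zero]
    exact @StronglyMeasurable.sup _ _ _ _ (ℱ 0) _ _ _ stronglyMeasurable_const (hX 0)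
  | succ n ih =>
    rw [funext (runningMax_succ n)]
    exact @StronglyMeasurable.sup _ _ _ _ (ℱ (n + 1)) _ _ _ (ih.mono (ℱ.mono n.le_succ))
      (hX (n + 1))

lemma integrable_runningMax_rpow [IsFiniteMeasure μ] (hL : 0 ≤ L) (hp : 0 ≤ p)
    (h0 : ∀ n, 0 ≤ᵐ[μ] X n) (hXp : ∀ n, Integrable (fun ω => X n ω ^ p) μ) (n : ℕ) :
    Integrable (fun ω => runningMax X L n ω ^ p) μ := by
  have rpow_max {x y : ℝ} (hx : 0 ≤ x) (hy : 0 ≤ y) : max (x ^ p) (y ^ p) = max x y ^ p :=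
    ((Real.monotoneOn_rpow_Ici_of_exponent_nonneg hp).map_max hx hy).symm
  induction n with
  | zero =>
    refine ((integrable_const (L ^ p)).sup (hXp 0)).congr ?_
    filter_upwards [h0 0] with ω hω
    rw [runningMax_zero, Pi.sup_apply, rpow_max hL hω]
  | succ n ih =>
    refine (ih.sup (hXp (n + 1))).congr ?_
    filter_upwards [h0 (n + 1)] with ω hω
    rw [runningMax_succ, Pi.sup_apply, rpow_max (hL.trans (level_le_runningMax n ω)) hω]

lemma integrable_rpow_sub_one_mul {g h : Ω → ℝ} (hp : 1 < p) (hgm : AEStronglyMeasurable g μ)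
    (hhm : AEStronglyMeasurable h μ) (hg0 : 0 ≤ᵐ[μ] g) (hh0 : 0 ≤ᵐ[μ] h)
    (hg : Integrable (fun ω => g ω ^ p) μ) (hh : Integrable (fun ω => h ω ^ p) μ) :
    Integrable (fun ω => g ω ^ (p - 1) * h ω) μ := by
  refine (hg.add hh).mono' ((hgm.aemeasurable.pow_const _).aestronglyMeasurable.mul hhm) ?_
  filter_upwards [hg0, hh0] with ω hgω hhω
  rw [Real.norm_of_nonneg (mul_nonneg (Real.rpow_nonneg hgω _) hhω)]
  exact rpow_sub_one_mul_le_add hp hgω hhω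

lemma integral_mul_martingale_succ [IsFiniteMeasure μ] (hX : Martingale X ℱ μ) {n : ℕ} {g : Ω → ℝ}
    (hg : StronglyMeasurable[ℱ n] g) (hgX : Integrable (fun ω => g ω * X (n + 1) ω) μ) :
    ∫ ω, g ω * X (n + 1) ω ∂μ = ∫ ω, g ω * X n ω ∂μ := by
  rw [← integral_condExp (ℱ.le n)]
  exact integral_congr_ae <|
    (condExp_mul_of_stronglyMeasurable_left hg hgX (hX.integrable (n + 1))).trans <|
      EventuallyEq.rfl.mul (hX.condExp_ae_eq n.le_succ)

lemma integrable_of_tendsto_of_integral_norm_le {f : ℕ → Ω → ℝ} {g : Ω → ℝ}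
    (hf : ∀ n, Integrable (f n) μ) (hC : ∀ n, ∫ ω, ‖f n ω‖ ∂μ ≤ C)
    (hfg : ∀ᵐ ω ∂μ, Tendsto (fun n => f n ω) atTop (𝓝 (g ω))) : Integrable g μ := by
  have hfm n : AEStronglyMeasurable (f n) μ := (hf n).aestronglyMeasurable
  refine memLp_one_iff_integrable.1 ⟨aestronglyMeasurable_of_tendsto_ae _ hfm hfg, ?_⟩
  refine (Lp.eLpNorm_lim_le_liminf_eLpNorm hfm g hfg).trans_lt ?_
  refine (liminf_le_of_frequently_le' (x := ENNReal.ofReal C) ?_).trans_lt ENNReal.ofReal_lt_top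
  refine Frequently.of_forall fun n => ?_
  rw [eLpNorm_one_eq_lintegral_enorm, ← ofReal_integral_norm_eq_lintegral_enorm (hf n)]
  exact ENNReal.ofReal_le_ofReal (hC n)

lemma integrable_runningMax_rpow_sub_one_mul [IsFiniteMeasure μ] (hX : Martingale X ℱ μ)
    (hL : 0 ≤ L) (hp : 1 < p) (h0 : ∀ n, 0 ≤ᵐ[μ] X n)
    (hXp : ∀ n, Integrable (fun ω => X n ω ^ p) μ) (n k : ℕ) :
    Integrable (fun ω => runningMax X L n ω ^ (p - 1) * X k ω) μ :=
  integrable_rpow_sub_one_mul hp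
    ((stronglyMeasurable_runningMax hX.stronglyAdapted n).mono (ℱ.le n)).aestronglyMeasurable
    (hX.integrable k).aestronglyMeasurable
    (ae_of_all _ fun ω => hL.trans (level_le_runningMax n ω)) (h0 k)
    (integrable_runningMax_rpow hL (by linarith) h0 hXp n) (hXp k)

lemma integrable_potential_runningMax [IsFiniteMeasure μ] (hX : Martingale X ℱ μ) (hL : 0 ≤ L)
    (hp : 1 < p) (h0 : ∀ n, 0 ≤ᵐ[μ] X n) (hXp : ∀ n, Integrable (fun ω => X n ω ^ p) μ) (n k : ℕ) :
    Integrable (fun ω => potential p a (runningMax X L n ω) (X k ω)) μ :=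
  (integrable_runningMax_rpow hL (by linarith) h0 hXp n).sub
    ((integrable_runningMax_rpow_sub_one_mul hX hL hp h0 hXp n k).const_mul a)

lemma integral_potential_runningMax_eq [IsFiniteMeasure μ] (hX : Martingale X ℱ μ) (hL : 0 ≤ L)
    (hp : 1 < p) (h0 : ∀ n, 0 ≤ᵐ[μ] X n) (hXp : ∀ n, Integrable (fun ω => X n ω ^ p) μ) (n k : ℕ) :
    ∫ ω, potential p a (runningMax X L n ω) (X k ω) ∂μ
      = ∫ ω, runningMax X L n ω ^ p ∂μ - a * ∫ ω, runningMax X L n ω ^ (p - 1) * X k ω ∂μ := by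
  rw [← integral_const_mul, ← integral_sub (integrable_runningMax_rpow hL (by linarith) h0 hXp n)
    ((integrable_runningMax_rpow_sub_one_mul hX hL hp h0 hXp n k).const_mul a)]
  rfl

lemma integral_potential_martingale_succ [IsFiniteMeasure μ] (hX : Martingale X ℱ μ) (hL : 0 ≤ L)
    (hp : 1 < p) (h0 : ∀ n, 0 ≤ᵐ[μ] X n) (hXp : ∀ n, Integrable (fun ω => X n ω ^ p) μ) (n : ℕ) :
    ∫ ω, potential p a (runningMax X L n ω) (X (n + 1) ω) ∂μ
      = ∫ ω, potential p a (runningMax X L n ω) (X n ω) ∂μ := by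
  have hS : StronglyMeasurable[ℱ n] fun ω => runningMax X L n ω ^ (p - 1) :=
    ((stronglyMeasurable_runningMax hX.stronglyAdapted n).measurable.pow_const _).stronglyMeasurable
  rw [integral_potential_runningMax_eq hX hL hp h0 hXp, integral_potential_runningMax_eq hX hL hp
    h0 hXp, integral_mul_martingale_succ hX hS
    (integrable_runningMax_rpow_sub_one_mul hX hL hp h0 hXp n (n + 1))]

lemma monotone_integral_potential [IsFiniteMeasure μ] (hX : Martingale X ℱ μ) (hL : 0 < L)
    (hp : 1 < p) (hR : 1 < R) (h0 : ∀ n, 0 ≤ᵐ[μ] X n)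
    (hXp : ∀ n, Integrable (fun ω => X n ω ^ p) μ)
    (hreg : ∀ n, ∀ᵐ ω ∂μ, X (n + 1) ω ≤ R * X n ω) :
    Monotone fun n => ∫ ω, potential p (regularConst R p) (runningMax X L n ω) (X n ω) ∂μ := by
  refine monotone_nat_of_le_succ fun n => ?_
  rw [← integral_potential_martingale_succ hX hL.le hp h0 hXp n]
  refine integral_mono_ae (integrable_potential_runningMax hX hL.le hp h0 hXp _ _)
    (integrable_potential_runningMax hX hL.le hp h0 hXp _ _) ?_
  filter_upwards [hreg n] with ω hω
  rw [runningMax_succ]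
  exact potential_le_max hp hR (hL.trans_le (level_le_runningMax n ω))
    (hω.trans (mul_le_mul_of_nonneg_left (le_runningMax n ω) (by linarith)))

lemma antitone_integral_potential [IsFiniteMeasure μ] (hX : Martingale X ℱ μ) (hL : 0 ≤ L)
    (hp : 1 < p) (h0 : ∀ n, 0 ≤ᵐ[μ] X n) (hXp : ∀ n, Integrable (fun ω => X n ω ^ p) μ) :
    Antitone fun n => ∫ ω, potential p (p / (p - 1)) (runningMax X L n ω) (X n ω) ∂μ := by
  refine antitone_nat_of_succ_le fun n => ?_
  rw [← integral_potential_martingale_succ hX hL hp h0 hXp n]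
  refine integral_mono_ae (integrable_potential_runningMax hX hL hp h0 hXp _ _)
    (integrable_potential_runningMax hX hL hp h0 hXp _ _) ?_
  filter_upwards [h0 (n + 1)] with ω hω
  rw [runningMax_succ]
  exact potential_max_le hp (hL.trans (level_le_runningMax n ω)) hω

lemma integral_potential_le [IsProbabilityMeasure μ] (hX : Martingale X ℱ μ) (hL : 0 ≤ L)
    (hp : 1 < p) (h0 : ∀ n, 0 ≤ᵐ[μ] X n) (hXp : ∀ n, Integrable (fun ω => X n ω ^ p) μ) (n : ℕ) :
    ∫ ω, potential p (p / (p - 1)) (runningMax X L n ω) (X n ω) ∂μ ≤ L ^ p := by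
  calc ∫ ω, potential p (p / (p - 1)) (runningMax X L n ω) (X n ω) ∂μ
      ≤ ∫ ω, potential p (p / (p - 1)) (runningMax X L 0 ω) (X 0 ω) ∂μ :=
        antitone_integral_potential hX hL hp h0 hXp n.zero_le
    _ ≤ ∫ _, L ^ p ∂μ := by
        refine integral_mono_ae (integrable_potential_runningMax hX hL hp h0 hXp _ _)
          (integrable_const _) ?_
        filter_upwards [h0 0] with ω hω
        have : 0 < p - 1 := by linarith
        have hX0 : 0 ≤ X 0 ω := hω
        rw [runningMax_zero]
        exact (potential_max_le hp hL hX0).trans (sub_le_self _ (by positivity))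
    _ = L ^ p := by simp

lemma integral_runningMax_rpow_le [IsProbabilityMeasure μ] (hX : Martingale X ℱ μ) (hL : 0 ≤ L)
    (hp : 1 < p) (h0 : ∀ n, 0 ≤ᵐ[μ] X n) (hXp : ∀ n, Integrable (fun ω => X n ω ^ p) μ) (n : ℕ) :
    ∫ ω, runningMax X L n ω ^ p ∂μ ≤ 2 * L ^ p + 2 ^ p / (p - 1) * ∫ ω, X n ω ^ p ∂μ := by
  have hSp := integrable_runningMax_rpow hL (by linarith) h0 hXp n
  have young : ∫ ω, runningMax X L n ω ^ p / 2 - 2 ^ p / (p - 1) / 2 * X n ω ^ p ∂μ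
      ≤ ∫ ω, potential p (p / (p - 1)) (runningMax X L n ω) (X n ω) ∂μ := by
    refine integral_mono_ae ((hSp.div_const 2).sub ((hXp n).const_mul _))
      (integrable_potential_runningMax hX hL hp h0 hXp n n) ?_
    filter_upwards [h0 n] with ω hω
    exact half_rpow_sub_le_potential hp (hL.trans (level_le_runningMax n ω)) hω
  rw [integral_sub (hSp.div_const 2) ((hXp n).const_mul _), integral_div, integral_const_mul]
    at young
  linarith [young.trans (integral_potential_le hX hL hp h0 hXp n)]

lemma ae_bddAbove_range_of_tendsto {ψ : Ω → ℝ}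
    (hψ : ∀ᵐ ω ∂μ, Tendsto (fun n => X n ω) atTop (𝓝 (ψ ω))) :
    ∀ᵐ ω ∂μ, BddAbove (range fun n => X n ω) :=
  hψ.mono fun _ hω => hω.bddAbove_range

lemma integrable_max_iSup_rpow [IsProbabilityMeasure μ] (hX : Martingale X ℱ μ) (hL : 0 ≤ L)
    (hp : 1 < p) (h0 : ∀ n, 0 ≤ᵐ[μ] X n) (hXp : ∀ n, Integrable (fun ω => X n ω ^ p) μ)
    (hC : ∀ n, ∫ ω, X n ω ^ p ∂μ ≤ C) (hbdd : ∀ᵐ ω ∂μ, BddAbove (range fun n => X n ω)) :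
    Integrable (fun ω => max L (⨆ n, X n ω) ^ p) μ := by
  have : 0 < p - 1 := by linarith
  refine integrable_of_tendsto_of_integral_norm_le (C := 2 * L ^ p + 2 ^ p / (p - 1) * C)
    (fun n => integrable_runningMax_rpow hL (by linarith) h0 hXp n) (fun n => ?_) ?_
  · have rpow_nonneg ω : 0 ≤ runningMax X L n ω ^ p :=
      Real.rpow_nonneg (hL.trans (level_le_runningMax n ω)) p
    simp only [Real.norm_of_nonneg (rpow_nonneg _)]
    exact (integral_runningMax_rpow_le hX hL hp h0 hXp n).trans (by gcongr; exact hC n)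
  · filter_upwards [hbdd] with ω hω
    exact (tendsto_runningMax hω).rpow_const (Or.inr (by linarith))

lemma tendsto_potential_runningMax (hp : 1 < p) {ω : Ω} {x : ℝ}
    (hω : Tendsto (fun n => X n ω) atTop (𝓝 x)) :
    Tendsto (fun n => potential p a (runningMax X L n ω) (X n ω)) atTop
      (𝓝 (potential p a (max L (⨆ n, X n ω)) x)) := by
  have hS := tendsto_runningMax (L := L) hω.bddAbove_range
  exact (hS.rpow_const (Or.inr (by linarith))).sub
    (((hS.rpow_const (Or.inr (by linarith))).mul hω).const_mul a)

lemma tendsto_integral_potential [IsFiniteMeasure μ] (hX : Martingale X ℱ μ) (hL : 0 ≤ L)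
    (hp : 1 < p) (h0 : ∀ n, 0 ≤ᵐ[μ] X n) (hXp : ∀ n, Integrable (fun ω => X n ω ^ p) μ)
    {ψ : Ω → ℝ} (hψ : ∀ᵐ ω ∂μ, Tendsto (fun n => X n ω) atTop (𝓝 (ψ ω)))
    (hM : Integrable (fun ω => max L (⨆ n, X n ω) ^ p) μ) :
    Tendsto (fun n => ∫ ω, potential p a (runningMax X L n ω) (X n ω) ∂μ) atTop
      (𝓝 (∫ ω, potential p a (max L (⨆ n, X n ω)) (ψ ω) ∂μ)) := by
  refine tendsto_integral_of_dominated_convergence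
    (fun ω => (1 + |a|) * max L (⨆ n, X n ω) ^ p)
    (fun n => (integrable_potential_runningMax hX hL hp h0 hXp n n).aestronglyMeasurable)
    (hM.const_mul _) (fun n => ?_) (hψ.mono fun ω hω => tendsto_potential_runningMax hp hω)
  filter_upwards [h0 n, ae_bddAbove_range_of_tendsto hψ] with ω hω hbdd
  have hS : 0 ≤ runningMax X L n ω := hL.trans (level_le_runningMax n ω)
  refine (abs_potential_le hp hω (le_runningMax n ω)).trans ?_
  gcongr
  exact runningMax_le_max_iSup hbdd n

lemma integral_potential_max_iSup_le [IsFiniteMeasure μ] (hX : Martingale X ℱ μ) (hL : 0 ≤ L)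
    (hp : 1 < p) (ha : 0 ≤ a) (h0 : ∀ n, 0 ≤ᵐ[μ] X n)
    (hXp : ∀ n, Integrable (fun ω => X n ω ^ p) μ)
    {ψ : Ω → ℝ} (hψ : ∀ᵐ ω ∂μ, Tendsto (fun n => X n ω) atTop (𝓝 (ψ ω)))
    (hM : Integrable (fun ω => max L (⨆ n, X n ω) ^ p) μ) :
    ∫ ω, potential p a (max L (⨆ n, X n ω)) (ψ ω) ∂μ
      ≤ ∫ ω, max L (⨆ n, X n ω) ^ p ∂μ - a * ∫ ω, ψ ω ^ p ∂μ := by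
  have hψ0 : ∀ᵐ ω ∂μ, 0 ≤ ψ ω := by
    filter_upwards [hψ, ae_all_iff.2 h0] with ω hω h0ω
    exact ge_of_tendsto' hω h0ω
  have hψM : ∀ᵐ ω ∂μ, ψ ω ≤ max L (⨆ n, X n ω) := hψ.mono fun ω hω =>
    le_max_of_le_right (le_of_tendsto' hω fun n => le_ciSup hω.bddAbove_range n)
  have hψp : Integrable (fun ω => ψ ω ^ p) μ := by
    refine hM.mono' ((aestronglyMeasurable_of_tendsto_ae _
      (fun n => (hX.integrable n).aestronglyMeasurable) hψ).aemeasurable.pow_const p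
      |>.aestronglyMeasurable) ?_
    filter_upwards [hψ0, hψM] with ω h0ω hMω
    rw [Real.norm_of_nonneg (Real.rpow_nonneg h0ω p)]
    gcongr
  have potential_integrable :
      Integrable (fun ω => potential p a (max L (⨆ n, X n ω)) (ψ ω)) μ := by
    refine (hM.const_mul (1 + |a|)).mono' (aestronglyMeasurable_of_tendsto_ae _
      (fun n => (integrable_potential_runningMax hX hL hp h0 hXp n n).aestronglyMeasurable)
      (hψ.mono fun ω hω => tendsto_potential_runningMax hp hω)) ?_
    filter_upwards [hψ0, hψM] with ω h0ω hMω
    exact abs_potential_le hp h0ω hMω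
  rw [← integral_const_mul, ← integral_sub hM (hψp.const_mul a)]
  refine integral_mono_ae potential_integrable (hM.sub (hψp.const_mul a)) ?_
  filter_upwards [hψ0, hψM] with ω h0ω hMω
  exact potential_le_sub hp ha h0ω hMω

lemma le_integral_max_iSup_rpow [IsProbabilityMeasure μ] (hX : Martingale X ℱ μ) (hL : 0 < L)
    (hp : 1 < p) (hR : 1 < R) (h0 : ∀ n, 0 ≤ᵐ[μ] X n)
    (hXp : ∀ n, Integrable (fun ω => X n ω ^ p) μ)
    (hreg : ∀ n, ∀ᵐ ω ∂μ, X (n + 1) ω ≤ R * X n ω) (hX0 : ∀ᵐ ω ∂μ, X 0 ω ≤ L)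
    {ψ : Ω → ℝ} (hψ : ∀ᵐ ω ∂μ, Tendsto (fun n => X n ω) atTop (𝓝 (ψ ω)))
    (hM : Integrable (fun ω => max L (⨆ n, X n ω) ^ p) μ) :
    L ^ p + regularConst R p * (∫ ω, ψ ω ^ p ∂μ - L ^ (p - 1) * ∫ ω, X 0 ω ∂μ)
      ≤ ∫ ω, max L (⨆ n, X n ω) ^ p ∂μ := by
  have initial : ∫ ω, potential p (regularConst R p) (runningMax X L 0 ω) (X 0 ω) ∂μ
      = L ^ p - regularConst R p * (L ^ (p - 1) * ∫ ω, X 0 ω ∂μ) := by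
    have : (fun ω => potential p (regularConst R p) (runningMax X L 0 ω) (X 0 ω))
        =ᵐ[μ] fun ω => L ^ p - regularConst R p * (L ^ (p - 1) * X 0 ω) := by
      filter_upwards [hX0] with ω hω
      rw [runningMax_zero, max_eq_left hω, potential]
    rw [integral_congr_ae this, integral_sub (integrable_const _)
      (((hX.integrable 0).const_mul _).const_mul _), integral_const_mul, integral_const_mul]
    simp
  have increase := (monotone_integral_potential hX hL hp hR h0 hXp hreg).ge_of_tendsto
    (tendsto_integral_potential hX hL.le hp h0 hXp hψ hM) 0
  have limit := integral_potential_max_iSup_le hX hL.le hp (regularConst_pos hR hp).le h0 hXp hψ hM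
  rw [initial] at increase
  linarith

lemma le_setIntegral_iSup_rpow [IsProbabilityMeasure μ] (hX : Martingale X ℱ μ) (hL : 0 < L)
    (hp : 1 < p) (hR : 1 < R) (h0 : ∀ n, 0 ≤ᵐ[μ] X n)
    (hXp : ∀ n, Integrable (fun ω => X n ω ^ p) μ)
    (hreg : ∀ n, ∀ᵐ ω ∂μ, X (n + 1) ω ≤ R * X n ω) (hX0 : ∀ᵐ ω ∂μ, X 0 ω ≤ L)
    {ψ : Ω → ℝ} (hψ : ∀ᵐ ω ∂μ, Tendsto (fun n => X n ω) atTop (𝓝 (ψ ω)))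
    (hM : Integrable (fun ω => max L (⨆ n, X n ω) ^ p) μ) {E : Set Ω} (hE : MeasurableSet E)
    (hEL : ∀ᵐ ω ∂μ, ω ∈ E → L ≤ ⨆ n, X n ω) (hEcL : ∀ᵐ ω ∂μ, ω ∉ E → ⨆ n, X n ω ≤ L) :
    μ.real E * L ^ p + regularConst R p * (∫ ω, ψ ω ^ p ∂μ - L ^ (p - 1) * ∫ ω, X 0 ω ∂μ)
      ≤ ∫ ω in E, (⨆ n, X n ω) ^ p ∂μ := by
  have on_E : ∫ ω in E, max L (⨆ n, X n ω) ^ p ∂μ = ∫ ω in E, (⨆ n, X n ω) ^ p ∂μ := by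
    refine setIntegral_congr_ae hE ?_
    filter_upwards [hEL] with ω hω hωE
    rw [max_eq_right (hω hωE)]
  have off_E : ∫ ω in Eᶜ, max L (⨆ n, X n ω) ^ p ∂μ = (1 - μ.real E) * L ^ p := by
    have : ∫ ω in Eᶜ, max L (⨆ n, X n ω) ^ p ∂μ = ∫ _ in Eᶜ, L ^ p ∂μ := by
      refine setIntegral_congr_ae hE.compl ?_
      filter_upwards [hEcL] with ω hω hωE
      rw [max_eq_left (hω hωE)]
    rw [this, setIntegral_const, probReal_compl_eq_one_sub hE, smul_eq_mul]
  have split := integral_add_compl hE hM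
  rw [on_E, off_E] at split
  linarith [le_integral_max_iSup_rpow hX hL hp hR h0 hXp hreg hX0 hψ hM]

end Martingales

section LevelSets

open scoped Topology

variable {ν : Measure ℝ} {κ : ℝ}

lemma continuous_measureReal_Iic [IsFiniteMeasure ν] [NullSingletonClass ν] :
    Continuous fun r => ν.real (Iic r) := by
  have primitive r : ν.real (Iic r) = ν.real (Iic 0) + ∫ _ in (0 : ℝ)..r, (1 : ℝ) ∂ν := by
    rw [← intervalIntegral.integral_Iic_sub_Iic integrableOn_const integrableOn_const]
    simp only [setIntegral_const, smul_eq_mul, mul_one, add_sub_cancel]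
  rw [funext primitive]
  exact continuous_const.add
    (intervalIntegral.continuous_primitive (fun _ _ => intervalIntegrable_const) 0)

lemma exists_measureReal_Iic_eq [IsFiniteMeasure ν] [NullSingletonClass ν] (h0 : 0 < κ)
    (h1 : κ < ν.real univ) : ∃ r, ν.real (Iic r) = κ := by
  refine mem_range_of_exists_le_of_exists_ge continuous_measureReal_Iic ?_ ?_
  · have tail : Tendsto (fun r => ν.real (Ici r)) atBot (𝓝 (ν.real univ)) :=
      (ENNReal.tendsto_toReal (measure_ne_top ν univ)).comp (tendsto_measure_Ici_atBot ν)
    obtain ⟨r, hr⟩ := (tail.eventually_const_lt (sub_lt_self (ν.real univ) h0)).exists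
    refine ⟨r, ?_⟩
    rw [← measureReal_congr (Iio_ae_eq_Iic (a := r)), ← compl_Ici,
      measureReal_compl measurableSet_Ici]
    linarith
  · have head : Tendsto (fun r => ν.real (Iic r)) atTop (𝓝 (ν.real univ)) :=
      (ENNReal.tendsto_toReal (measure_ne_top ν univ)).comp (tendsto_measure_Iic_atTop ν)
    obtain ⟨r, hr⟩ := (head.eventually_const_lt h1).exists
    exact ⟨r, hr.le⟩

lemma exists_subset_measureReal_eq [IsFiniteMeasure ν] [NullSingletonClass ν] {s t : Set ℝ}
    (hs : MeasurableSet s) (ht : MeasurableSet t) (hst : s ⊆ t) (hsκ : ν.real s ≤ κ)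
    (hκt : κ ≤ ν.real t) : ∃ E, MeasurableSet E ∧ s ⊆ E ∧ E ⊆ t ∧ ν.real E = κ := by
  obtain rfl | hsκ := hsκ.eq_or_lt
  · exact ⟨s, hs, subset_rfl, hst, rfl⟩
  obtain rfl | hκt := hκt.eq_or_lt
  · exact ⟨t, ht, hst, subset_rfl, rfl⟩
  have hst_sdiff : ν.real (t \ s) = ν.real t - ν.real s := measureReal_sdiff hst hs
  obtain ⟨r, hr⟩ := exists_measureReal_Iic_eq (ν := ν.restrict (t \ s)) (sub_pos.2 hsκ)
    (by rw [measureReal_restrict_apply_univ, hst_sdiff]; linarith)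
  rw [measureReal_restrict_apply measurableSet_Iic] at hr
  refine ⟨s ∪ Iic r ∩ (t \ s), hs.union (measurableSet_Iic.inter (ht.diff hs)), subset_union_left,
    union_subset hst (inter_subset_right.trans sdiff_subset), ?_⟩
  rw [measureReal_union (disjoint_sdiff_right.mono_right inter_subset_right)
    (measurableSet_Iic.inter (ht.diff hs)), hr]
  ring

lemma exists_measureReal_Ioi_le_and_le_measureReal_Ici [IsProbabilityMeasure ν] (hκ0 : 0 < κ)
    (hκ1 : κ < 1) : ∃ L, ν.real (Ioi L) ≤ κ ∧ κ ≤ ν.real (Ici L) := by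
  set G := ProbabilityTheory.cdf ν
  have G_atTop : Tendsto G atTop (𝓝 1) := ProbabilityTheory.tendsto_cdf_atTop ν
  have G_atBot : Tendsto G atBot (𝓝 0) := ProbabilityTheory.tendsto_cdf_atBot ν
  let S : Set ℝ := {t | 1 - κ ≤ G t}
  have hS_nonempty : S.Nonempty :=
    (G_atTop.eventually_const_le (sub_lt_self (1 : ℝ) hκ0)).exists
  have hS_bdd : BddBelow S := by
    obtain ⟨b, hb⟩ := (G_atBot.eventually_lt_const (sub_pos.2 hκ1)).exists
    exact ⟨b, fun t ht => (G.mono.reflect_lt (hb.trans_le ht)).le⟩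
  have right_ge : 1 - κ ≤ G (sInf S) := by
    refine ge_of_tendsto ((G.right_continuous (sInf S)).mono Ioi_subset_Ici_self) ?_
    filter_upwards [self_mem_nhdsWithin] with t ht
    obtain ⟨u, hu, hut⟩ := exists_lt_of_csInf_lt hS_nonempty ht
    exact hu.trans (G.mono hut.le)
  have left_le : Function.leftLim G (sInf S) ≤ 1 - κ := by
    refine le_of_tendsto (G.mono.tendsto_leftLim (sInf S)) ?_
    filter_upwards [self_mem_nhdsWithin] with t ht
    exact (not_le.1 (notMem_of_lt_csInf (s := S) ht hS_bdd)).le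
  refine ⟨sInf S, ?_, ?_⟩
  · rw [measureReal_def, ← ProbabilityTheory.measure_cdf ν, G.measure_Ioi G_atTop,
      ENNReal.toReal_ofReal']
    exact max_le (by linarith) hκ0.le
  · rw [measureReal_def, ← ProbabilityTheory.measure_cdf ν, G.measure_Ici G_atTop,
      ENNReal.toReal_ofReal (by linarith)]
    linarith

lemma exists_superlevel_measureReal_eq [IsProbabilityMeasure ν] [NullSingletonClass ν] {M : ℝ → ℝ}
    (hM : Measurable M) (hκ0 : 0 < κ) (hκ1 : κ < 1) :
    ∃ L E, MeasurableSet E ∧ ν.real E = κ ∧ (∀ x ∈ E, L ≤ M x) ∧ ∀ x ∉ E, M x ≤ L := by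
  have := Measure.isProbabilityMeasure_map (μ := ν) hM.aemeasurable
  obtain ⟨L, hIoi, hIci⟩ :=
    exists_measureReal_Ioi_le_and_le_measureReal_Ici (ν := ν.map M) hκ0 hκ1
  rw [map_measureReal_apply hM measurableSet_Ioi] at hIoi
  rw [map_measureReal_apply hM measurableSet_Ici] at hIci
  obtain ⟨E, hE, hIoiE, hEIci, hEκ⟩ := exists_subset_measureReal_eq (hM measurableSet_Ioi)
    (hM measurableSet_Ici) (preimage_mono Ioi_subset_Ici_self) hIoi hIci
  exact ⟨L, E, hE, hEκ, fun x hx => hEIci hx, fun x hx => not_lt.1 fun h => hx (hIoiE h)⟩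

end LevelSets

section ConditionalExpectation

variable {Ω ι E : Type*} {m m0 : MeasurableSpace Ω} {μ : Measure Ω} {φ : Ω → ℝ} {p : ℝ}

lemma condExp_comap_apply [NormedAddCommGroup E] [NormedSpace ℝ E] [CompleteSpace E]
    [mι : MeasurableSpace ι] [MeasurableSingletonClass ι] [IsFiniteMeasure μ] {g : Ω → ι}
    (hg : Measurable g) {φ : Ω → E} (hφ : Integrable φ μ) {ω : Ω} (hω : μ (g ⁻¹' {g ω}) ≠ 0) :
    μ[φ | mι.comap g] ω = ⨍ ω' in g ⁻¹' {g ω}, φ ω' ∂μ := by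
  have const_on_fibre : EqOn (μ[φ | mι.comap g]) (fun _ => μ[φ | mι.comap g] ω) (g ⁻¹' {g ω}) :=
    fun ω' hω' => stronglyMeasurable_condExp.factorsThrough hω'
  have integral_fibre := setIntegral_condExp hg.comap_le hφ
    ⟨{g ω}, measurableSet_singleton (g ω), rfl⟩
  rw [setIntegral_congr_fun (hg (measurableSet_singleton (g ω))) const_on_fibre,
    setIntegral_const] at integral_fibre
  have : μ.real (g ⁻¹' {g ω}) ≠ 0 := (measureReal_ne_zero_iff).2 hω
  rw [setAverage_eq, ← integral_fibre, inv_smul_smul₀ this]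

lemma rpow_eq_norm_rpow (h0 : 0 ≤ᵐ[μ] φ) :
    (fun ω => φ ω ^ p) =ᵐ[μ] fun ω => ‖φ ω‖ ^ p := by
  filter_upwards [h0] with ω hω
  rw [Real.norm_of_nonneg hω]

lemma integrable_condExp_rpow (hp : 1 ≤ p) (h0 : 0 ≤ᵐ[μ] φ)
    (hφp : Integrable (fun ω => φ ω ^ p) μ) : Integrable (fun ω => μ[φ | m] ω ^ p) μ := by
  refine (integrable_condExp (m := m) (f := fun ω => ‖φ ω‖ ^ p)).mono'
    (integrable_condExp.aestronglyMeasurable.aemeasurable.pow_const p).aestronglyMeasurable ?_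
  filter_upwards [Integrable.norm_condExp_rpow_le (m := m) hp
    (hφp.congr (rpow_eq_norm_rpow h0)), condExp_nonneg (m := m) h0] with ω jensen hω
  rwa [Real.norm_rpow_of_nonneg hω]

lemma integral_condExp_rpow_le (hp : 1 ≤ p) (h0 : 0 ≤ᵐ[μ] φ)
    (hφp : Integrable (fun ω => φ ω ^ p) μ) :
    ∫ ω, μ[φ | m] ω ^ p ∂μ ≤ ∫ ω, φ ω ^ p ∂μ := by
  rw [integral_congr_ae (rpow_eq_norm_rpow (condExp_nonneg h0)),
    integral_congr_ae (rpow_eq_norm_rpow h0)]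
  exact integral_norm_condExp_rpow_le hp (hφp.congr (rpow_eq_norm_rpow h0))

end ConditionalExpectation

section AdicIntervals

open scoped Topology

variable {N m k : ℕ} {x : ℝ} {φ : ℝ → ℝ}

lemma measurableSet_adicItv : MeasurableSet (adicItv N m k) := measurableSet_Ico

lemma volume_real_adicItv : volume.real (adicItv N m k) = ((N : ℝ) ^ m)⁻¹ := by
  have : (k : ℝ) / (N : ℝ) ^ m ≤ (k + 1) / (N : ℝ) ^ m := by gcongr; linarith
  rw [adicItv, Real.volume_real_Ico_of_le this]
  ring

lemma adicItv_zero_zero : adicItv N 0 0 = Ico 0 1 := by simp [adicItv]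

lemma adicItv_subset_Ico (hk : k < N ^ m) : adicItv N m k ⊆ Ico 0 1 := by
  have : (k : ℝ) + 1 ≤ (N : ℝ) ^ m := mod_cast hk
  exact Ico_subset_Ico (by positivity) (div_le_one_of_le₀ this (by positivity))

/-- The index of the `N`-adic interval of level `m` containing `x`. It is an integer, rather than a
natural number, so that the indices of all levels separate the points of the whole real line. -/
noncomputable def adicIndex (N m : ℕ) (x : ℝ) : ℤ := ⌊x * (N : ℝ) ^ m⌋

lemma measurable_adicIndex : Measurable (adicIndex N m) :=
  Int.measurable_floor.comp (measurable_id.mul_const _)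

lemma adicIndex_succ_ediv [NeZero N] : adicIndex N (m + 1) x / N = adicIndex N m x := by
  rw [adicIndex, adicIndex, pow_succ, ← mul_assoc, Int.mul_natCast_floor_div_cancel (NeZero.ne N)]

lemma mem_adicItv_iff [NeZero N] : x ∈ adicItv N m k ↔ adicIndex N m x = k := by
  have : (0 : ℝ) < (N : ℝ) ^ m := by have := NeZero.pos N; positivity
  rw [adicItv, mem_Ico, div_le_iff₀ this, lt_div_iff₀ this, adicIndex, Int.floor_eq_iff,
    Int.cast_natCast]

lemma adicIndex_preimage_singleton [NeZero N] : adicIndex N m ⁻¹' {(k : ℤ)} = adicItv N m k :=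
  Set.ext fun _ => mem_adicItv_iff.symm

lemma exists_mem_adicItv [NeZero N] (m : ℕ) (hx : x ∈ Ico (0 : ℝ) 1) :
    ∃ k < N ^ m, x ∈ adicItv N m k := by
  have : (0 : ℝ) < (N : ℝ) ^ m := by have := NeZero.pos N; positivity
  obtain ⟨k, hk⟩ := Int.eq_ofNat_of_zero_le (Int.floor_nonneg.2 (mul_nonneg hx.1 this.le))
  refine ⟨k, ?_, mem_adicItv_iff.2 hk⟩
  have : (k : ℝ) < (N : ℝ) ^ m := by
    calc (k : ℝ) = ((k : ℤ) : ℝ) := rfl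
      _ ≤ x * (N : ℝ) ^ m := Int.le_floor.1 hk.ge
      _ < (N : ℝ) ^ m := mul_lt_of_lt_one_left this hx.2
  exact_mod_cast this

lemma adicItv_succ_subset [NeZero N] {j : ℕ} (hj : x ∈ adicItv N (m + 1) j)
    (hk : x ∈ adicItv N m k) : adicItv N (m + 1) j ⊆ adicItv N m k := by
  intro y hy
  rw [mem_adicItv_iff] at hj hk hy ⊢
  rw [← adicIndex_succ_ediv, hy, ← hj, adicIndex_succ_ediv, hk]

lemma adicAvg_zero_zero (h0 : ∀ x ∈ Ico (0 : ℝ) 1, 0 ≤ φ x) :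
    adicAvg N φ 0 0 = ∫ x in Ico (0 : ℝ) 1, φ x := by
  rw [adicAvg, adicItv_zero_zero, pow_zero, one_mul]
  exact setIntegral_congr_fun measurableSet_Ico fun x hx => abs_of_nonneg (h0 x hx)

lemma adicAvg_nonneg : 0 ≤ adicAvg N φ m k :=
  mul_nonneg (by positivity) (integral_nonneg fun _ => abs_nonneg _)

lemma adicAvg_le_of_abs_le [NeZero N] {A : ℝ} (hA : ∀ x, |φ x| ≤ A) : adicAvg N φ m k ≤ A := by
  have : (0 : ℝ) < (N : ℝ) ^ m := by have := NeZero.pos N; positivity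
  have bound := norm_setIntegral_le_of_norm_le_const (μ := volume) (s := adicItv N m k)
    measure_Ico_lt_top fun x _ => (norm_abs_eq_norm (φ x)).le.trans (hA x)
  rw [volume_real_adicItv, ← div_eq_mul_inv, le_div_iff₀' this] at bound
  exact (mul_le_mul_of_nonneg_left (le_abs_self _) this.le).trans bound

lemma adicAvg_succ_le [NeZero N] {j : ℕ} (hφ : IntegrableOn φ (adicItv N m k))
    (hj : x ∈ adicItv N (m + 1) j) (hk : x ∈ adicItv N m k) :
    adicAvg N φ (m + 1) j ≤ N * adicAvg N φ m k := by
  rw [adicAvg, adicAvg, pow_succ', mul_assoc]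
  gcongr
  · exact Eventually.of_forall fun _ => abs_nonneg _
  · exact hφ.abs
  · exact adicItv_succ_subset hj hk

lemma adicMax_nonneg : 0 ≤ adicMax N φ x := by
  refine Real.sSup_nonneg ?_
  rintro _ ⟨m, k, _, _, rfl⟩
  exact adicAvg_nonneg

lemma adicMax_le_of_abs_le [NeZero N] {A : ℝ} (hA : ∀ x, |φ x| ≤ A) : adicMax N φ x ≤ A := by
  refine Real.sSup_le ?_ ((abs_nonneg (φ 0)).trans (hA 0))
  rintro _ ⟨m, k, _, _, rfl⟩
  exact adicAvg_le_of_abs_le hA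

lemma tendsto_adicIndex_div (hN : 1 < N) (x : ℝ) :
    Tendsto (fun m => (adicIndex N m x : ℝ) / (N : ℝ) ^ m) atTop (𝓝 x) := by
  have hpow m : (0 : ℝ) < (N : ℝ) ^ m := by positivity
  have mesh : Tendsto (fun m => x - ((N : ℝ) ^ m)⁻¹) atTop (𝓝 x) := by
    simpa using tendsto_const_nhds.sub
      (tendsto_pow_atTop_atTop_of_one_lt (Nat.one_lt_cast.2 hN : (1 : ℝ) < N)).inv_tendsto_atTop
  refine tendsto_of_tendsto_of_tendsto_of_le_of_le mesh tendsto_const_nhds (fun m => ?_)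
    (fun m => (div_le_iff₀ (hpow m)).2 (Int.floor_le _))
  rw [le_div_iff₀ (hpow m), sub_mul, inv_mul_cancel₀ (hpow m).ne']
  exact (Int.sub_one_lt_floor _).le

/-- The filtration on `ℝ` whose `m`-th σ-algebra is generated by the `N`-adic intervals of
level `m`. -/
noncomputable def adicFiltration (N : ℕ) [NeZero N] : Filtration ℕ Real.measurableSpace where
  seq m := MeasurableSpace.comap (adicIndex N m) inferInstance
  mono' := monotone_nat_of_le_succ fun m => by
    have : adicIndex N m = (fun i => i / (N : ℤ)) ∘ adicIndex N (m + 1) :=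
      funext fun _ => adicIndex_succ_ediv.symm
    exact MeasurableSpace.comap_le_comap_of_eq_comp _ .of_discrete this
  le' _ := measurable_adicIndex.comap_le

lemma iSup_adicFiltration [NeZero N] (hN : 1 < N) :
    ⨆ m, adicFiltration N m = Real.measurableSpace := by
  refine le_antisymm (iSup_le (adicFiltration N).le) ?_
  have index_measurable m : Measurable[⨆ m, adicFiltration N m] (adicIndex N m) :=
    measurable_iff_comap_le.2 (le_iSup (adicFiltration N) m)
  have : @Measurable ℝ ℝ (⨆ m, adicFiltration N m) _ id :=
    @measurable_of_tendsto_metrizable _ _ (⨆ m, adicFiltration N m) _ _ _ _ _ _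
      (fun m => (measurable_from_top.comp (index_measurable m)).div_const _)
      (tendsto_pi_nhds.2 (tendsto_adicIndex_div hN))
  exact fun s hs => this hs

end AdicIntervals

section AdicMartingale

open scoped Topology

variable {N m k : ℕ} [NeZero N] {p κ L : ℝ} {x : ℝ} {φ : ℝ → ℝ} {E : Set ℝ}

/-- Lebesgue measure on the unit interval `[0, 1)`, as a probability measure on `ℝ`. -/
noncomputable abbrev unitMeasure : Measure ℝ := volume.restrict (Ico 0 1)

instance : IsProbabilityMeasure unitMeasure := ⟨by simp⟩

lemma unitMeasure_restrict (hE : E ⊆ Ico 0 1) : unitMeasure.restrict E = volume.restrict E :=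
  Measure.restrict_restrict_of_subset hE

lemma ae_nonneg_unitMeasure (h0 : ∀ x ∈ Ico (0 : ℝ) 1, 0 ≤ φ x) : 0 ≤ᵐ[unitMeasure] φ :=
  ae_restrict_of_forall_mem measurableSet_Ico h0

lemma condExp_adicFiltration_apply (hφ : Integrable φ unitMeasure)
    (h0 : ∀ x ∈ Ico (0 : ℝ) 1, 0 ≤ φ x) (hk : k < N ^ m) (hx : x ∈ adicItv N m k) :
    unitMeasure[φ | adicFiltration N m] x = adicAvg N φ m k := by
  have fibre : adicIndex N m ⁻¹' {adicIndex N m x} = adicItv N m k := by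
    rw [mem_adicItv_iff.1 hx, adicIndex_preimage_singleton]
  have volume_fibre : unitMeasure.real (adicItv N m k) = ((N : ℝ) ^ m)⁻¹ := by
    rw [← volume_real_adicItv (k := k), measureReal_restrict_apply measurableSet_adicItv,
      inter_eq_left.2 (adicItv_subset_Ico hk)]
  have fibre_ne_zero : unitMeasure (adicIndex N m ⁻¹' {adicIndex N m x}) ≠ 0 := by
    have : (N : ℝ) ≠ 0 := NeZero.ne _
    rw [fibre, ← measureReal_ne_zero_iff, volume_fibre]
    positivity
  refine (condExp_comap_apply measurable_adicIndex hφ fibre_ne_zero).trans ?_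
  rw [fibre, setAverage_eq, volume_fibre, inv_inv, unitMeasure_restrict (adicItv_subset_Ico hk),
    adicAvg, smul_eq_mul]
  congr 1
  exact setIntegral_congr_fun measurableSet_adicItv fun y hy =>
    (abs_of_nonneg (h0 y (adicItv_subset_Ico hk hy))).symm

lemma adicMax_eq_iSup_condExp (hφ : Integrable φ unitMeasure)
    (h0 : ∀ x ∈ Ico (0 : ℝ) 1, 0 ≤ φ x) (hx : x ∈ Ico (0 : ℝ) 1) :
    adicMax N φ x = ⨆ m, unitMeasure[φ | adicFiltration N m] x := by
  rw [adicMax, iSup]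
  congr 1
  ext r
  constructor
  · rintro ⟨m, k, hk, hxk, rfl⟩
    exact ⟨m, condExp_adicFiltration_apply hφ h0 hk hxk⟩
  · rintro ⟨m, rfl⟩
    obtain ⟨k, hk, hxk⟩ := exists_mem_adicItv (N := N) m hx
    exact ⟨m, k, hk, hxk, condExp_adicFiltration_apply hφ h0 hk hxk⟩

lemma condExp_adicFiltration_zero (hφ : Integrable φ unitMeasure)
    (h0 : ∀ x ∈ Ico (0 : ℝ) 1, 0 ≤ φ x) (hx : x ∈ Ico (0 : ℝ) 1) :
    unitMeasure[φ | adicFiltration N 0] x = ∫ y in Ico (0 : ℝ) 1, φ y := by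
  rw [← adicItv_zero_zero (N := N)] at hx
  rw [condExp_adicFiltration_apply hφ h0 (by simp) hx, adicAvg_zero_zero h0]

lemma condExp_adicFiltration_succ_le (hφ : Integrable φ unitMeasure)
    (h0 : ∀ x ∈ Ico (0 : ℝ) 1, 0 ≤ φ x) (hx : x ∈ Ico (0 : ℝ) 1) :
    unitMeasure[φ | adicFiltration N (m + 1)] x ≤ N * unitMeasure[φ | adicFiltration N m] x := by
  obtain ⟨j, hj, hxj⟩ := exists_mem_adicItv (N := N) (m + 1) hx
  obtain ⟨k, hk, hxk⟩ := exists_mem_adicItv (N := N) m hx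
  rw [condExp_adicFiltration_apply hφ h0 hj hxj, condExp_adicFiltration_apply hφ h0 hk hxk]
  exact adicAvg_succ_le (IntegrableOn.mono_set hφ (adicItv_subset_Ico hk)) hxj hxk

lemma tendsto_ae_condExp_adicFiltration (hN : 1 < N) (hm : Measurable φ)
    (hφ : Integrable φ unitMeasure) :
    ∀ᵐ x ∂unitMeasure,
      Tendsto (fun m => unitMeasure[φ | adicFiltration N m] x) atTop (𝓝 (φ x)) :=
  hφ.tendsto_ae_condExp (by rw [iSup_adicFiltration hN]; exact hm.stronglyMeasurable)

lemma integral_le_adicMax_ae (hN : 1 < N) (hm : Measurable φ) (hφ : Integrable φ unitMeasure)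
    (h0 : ∀ x ∈ Ico (0 : ℝ) 1, 0 ≤ φ x) :
    ∀ᵐ x ∂unitMeasure, ∫ y in Ico (0 : ℝ) 1, φ y ≤ adicMax N φ x := by
  filter_upwards [ae_bddAbove_range_of_tendsto (tendsto_ae_condExp_adicFiltration hN hm hφ),
    ae_restrict_mem measurableSet_Ico] with x hbdd hx
  rw [adicMax_eq_iSup_condExp hφ h0 hx, ← condExp_adicFiltration_zero (N := N) hφ h0 hx]
  exact le_ciSup hbdd 0

lemma integrable_max_adicMax_rpow (hN : 1 < N) (hL : 0 ≤ L) (hp : 1 < p) (hm : Measurable φ)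
    (hφ : Integrable φ unitMeasure) (hφp : Integrable (fun x => φ x ^ p) unitMeasure)
    (h0 : ∀ x ∈ Ico (0 : ℝ) 1, 0 ≤ φ x) :
    Integrable (fun x => max L (adicMax N φ x) ^ p) unitMeasure := by
  have h0_ae := ae_nonneg_unitMeasure h0
  refine (integrable_max_iSup_rpow (martingale_condExp φ (adicFiltration N) unitMeasure) hL hp
    (fun m => condExp_nonneg h0_ae) (fun m => integrable_condExp_rpow hp.le h0_ae hφp)
    (fun m => integral_condExp_rpow_le hp.le h0_ae hφp)
    (ae_bddAbove_range_of_tendsto (tendsto_ae_condExp_adicFiltration hN hm hφ))).congr ?_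
  filter_upwards [ae_restrict_mem measurableSet_Ico] with x hx
  rw [adicMax_eq_iSup_condExp hφ h0 hx]

lemma integrable_adicMax_rpow (hN : 1 < N) (hp : 1 < p) (hm : Measurable φ)
    (hφ : Integrable φ unitMeasure) (hφp : Integrable (fun x => φ x ^ p) unitMeasure)
    (h0 : ∀ x ∈ Ico (0 : ℝ) 1, 0 ≤ φ x) :
    Integrable (fun x => adicMax N φ x ^ p) unitMeasure := by
  simpa only [max_eq_right adicMax_nonneg] using
    integrable_max_adicMax_rpow hN le_rfl hp hm hφ hφp h0

lemma le_setIntegral_adicMax_rpow (hN : 1 < N) (hL : 0 < L) (hp : 1 < p) (hm : Measurable φ)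
    (hφ : Integrable φ unitMeasure) (hφp : Integrable (fun x => φ x ^ p) unitMeasure)
    (h0 : ∀ x ∈ Ico (0 : ℝ) 1, 0 ≤ φ x) (hφL : ∫ x in Ico (0 : ℝ) 1, φ x ≤ L)
    (hE : MeasurableSet E) (hE1 : E ⊆ Ico 0 1) (hEL : ∀ x ∈ E, L ≤ adicMax N φ x)
    (hEcL : ∀ x ∈ Ico 0 1 \ E, adicMax N φ x ≤ L) :
    volume.real E * L ^ p + regularConst N p *
        ((∫ x in Ico (0 : ℝ) 1, φ x ^ p) - L ^ (p - 1) * ∫ x in Ico (0 : ℝ) 1, φ x)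
      ≤ ∫ x in E, adicMax N φ x ^ p := by
  have h0_ae := ae_nonneg_unitMeasure h0
  have hM x (hx : x ∈ Ico (0 : ℝ) 1) := adicMax_eq_iSup_condExp (N := N) hφ h0 hx
  have key := le_setIntegral_iSup_rpow (martingale_condExp φ (adicFiltration N) unitMeasure) hL hp
    (Nat.one_lt_cast.2 hN) (fun m => condExp_nonneg h0_ae)
    (fun m => integrable_condExp_rpow hp.le h0_ae hφp)
    (fun m => ae_restrict_of_forall_mem measurableSet_Ico fun x hx =>
      condExp_adicFiltration_succ_le hφ h0 hx)
    (ae_restrict_of_forall_mem measurableSet_Ico fun x hx =>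
      (condExp_adicFiltration_zero hφ h0 hx).trans_le hφL)
    (tendsto_ae_condExp_adicFiltration hN hm hφ)
    ((integrable_max_adicMax_rpow hN hL.le hp hm hφ hφp h0).congr
      (ae_restrict_of_forall_mem measurableSet_Ico fun x hx => by simp only [hM x hx])) hE
    (ae_restrict_of_forall_mem measurableSet_Ico fun x hx hxE => hM x hx ▸ hEL x hxE)
    (ae_restrict_of_forall_mem measurableSet_Ico fun x hx hxE => hM x hx ▸ hEcL x ⟨hx, hxE⟩)
  rw [integral_condExp, measureReal_restrict_apply hE, inter_eq_left.2 hE1,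
    unitMeasure_restrict hE1] at key
  exact key.trans_eq (setIntegral_congr_fun hE fun x hx => by simp only [hM x (hE1 hx)])

lemma exists_superlevel_adicMax (hN : 1 < N) (hκ0 : 0 < κ) (hκ1 : κ < 1) (hm : Measurable φ)
    (hφ : Integrable φ unitMeasure) (h0 : ∀ x ∈ Ico (0 : ℝ) 1, 0 ≤ φ x) :
    ∃ L E, MeasurableSet E ∧ E ⊆ Ico 0 1 ∧ volume.real E = κ ∧
      ∫ x in Ico (0 : ℝ) 1, φ x ≤ L ∧ (∀ x ∈ E, L ≤ adicMax N φ x) ∧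
      ∀ x ∈ Ico 0 1 \ E, adicMax N φ x ≤ L := by
  have iSup_measurable : Measurable fun x => ⨆ m, unitMeasure[φ | adicFiltration N m] x :=
    Measurable.iSup fun m => (stronglyMeasurable_condExp.mono ((adicFiltration N).le m)).measurable
  obtain ⟨L, E, hE, hEκ, hEL, hEcL⟩ :=
    exists_superlevel_measureReal_eq (ν := unitMeasure) iSup_measurable hκ0 hκ1
  have hM x (hx : x ∈ Ico (0 : ℝ) 1) := adicMax_eq_iSup_condExp (N := N) hφ h0 hx
  refine ⟨L, E ∩ Ico 0 1, hE.inter measurableSet_Ico, inter_subset_right, ?_, ?_, ?_, ?_⟩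
  · rwa [← measureReal_restrict_apply hE]
  · by_contra! hL
    have ae_mem : ∀ᵐ x ∂unitMeasure, x ∈ E := by
      filter_upwards [integral_le_adicMax_ae hN hm hφ h0, ae_restrict_mem measurableSet_Ico]
        with x hφM hx
      rw [hM x hx] at hφM
      by_contra hxE
      exact absurd (hφM.trans (hEcL x hxE)) hL.not_ge
    rw [measureReal_def, (mem_ae_iff_prob_eq_one hE).1 ae_mem] at hEκ
    exact hκ1.ne' hEκ
  · rintro x ⟨hxE, hx⟩
    exact (hEL x hxE).trans_eq (hM x hx).symm
  · rintro x ⟨hx, hxE⟩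
    exact (hM x hx).trans_le (hEcL x fun h => hxE ⟨h, hx⟩)

end AdicMartingale

section Bellman

variable {N : ℕ} {p f κ A L : ℝ} {φ : ℝ → ℝ} {E : Set ℝ}

lemma setIntegral_adicMax_rpow_le_supMeas (hN : 1 < N) (hp : 1 < p) (hm : Measurable φ)
    (hφ : Integrable φ unitMeasure) (hφp : Integrable (fun x => φ x ^ p) unitMeasure)
    (h0 : ∀ x ∈ Ico (0 : ℝ) 1, 0 ≤ φ x) (hE : MeasurableSet E) (hE1 : E ⊆ Ico 0 1) :
    ∫ x in E, adicMax N φ x ^ p ≤ supMeas N p (volume.real E) φ := by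
  have : NeZero N := ⟨by lia⟩
  have hEv : volume E = ENNReal.ofReal (volume.real E) :=
    (ofReal_measureReal (measure_ne_top_of_subset hE1 measure_Ico_lt_top.ne)).symm
  refine le_csSup ⟨∫ x in Ico 0 1, adicMax N φ x ^ p, ?_⟩ ⟨E, hE, hE1, hEv, rfl⟩
  rintro _ ⟨E', _, hE', _, rfl⟩
  exact setIntegral_mono_set (integrable_adicMax_rpow hN hp hm hφ hφp h0)
    (Eventually.of_forall fun x => Real.rpow_nonneg adicMax_nonneg p) hE'.eventuallyLE

lemma supMeas_le_of_abs_le (hN : N ≠ 0) (hp : 0 ≤ p) (hκ : 0 ≤ κ) (hA : ∀ x, |φ x| ≤ A) :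
    supMeas N p κ φ ≤ κ * A ^ p := by
  have : NeZero N := ⟨hN⟩
  have hA0 : 0 ≤ A := (abs_nonneg (φ 0)).trans (hA 0)
  refine Real.sSup_le ?_ (by positivity)
  rintro _ ⟨E, _, _, hEκ, rfl⟩
  have bound := norm_setIntegral_le_of_norm_le_const (μ := volume) (s := E)
    (f := fun x => adicMax N φ x ^ p) (C := A ^ p) (hEκ ▸ ENNReal.ofReal_lt_top) fun x _ => by
      rw [Real.norm_of_nonneg (Real.rpow_nonneg adicMax_nonneg p)]
      exact Real.rpow_le_rpow adicMax_nonneg (adicMax_le_of_abs_le hA) hp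
  rw [measureReal_def, hEκ, ENNReal.toReal_ofReal hκ, mul_comm] at bound
  exact (le_abs_self _).trans bound

lemma mul_rpow_sub_rpow_le {c : ℝ} (hp : 1 < p) (hf : 0 ≤ f) (hc : 0 ≤ c) (hL : 0 ≤ L)
    (hA : 0 < A) (hLA : L ≤ A) (hκ : κ ≤ (p - 1) / p * c * (f / A)) :
    κ * (A ^ p - L ^ p) ≤ c * (f * A ^ (p - 1) - L ^ (p - 1) * f) := by
  have : 0 < p := by linarith
  have diff_nonneg : 0 ≤ A ^ p - L ^ p := sub_nonneg.2 (by gcongr)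
  calc κ * (A ^ p - L ^ p) ≤ (p - 1) / p * c * (f / A) * (A ^ p - L ^ p) := by gcongr
    _ = c * f / (p * A) * ((p - 1) * (A ^ p - L ^ p)) := by field_simp
    _ ≤ c * f / (p * A) * (p * ((A ^ (p - 1) - L ^ (p - 1)) * A)) := by
        have := mul_rpow_sub_one_mul_sub_le hp hA.le hL
        gcongr
    _ = c * (f * A ^ (p - 1) - L ^ (p - 1) * f) := by field_simp

lemma mul_rpow_le_supMeas (hN : 1 < N) (hp : 1 < p) (hf : 0 < f) (hA : 0 < A) (hκ0 : 0 < κ)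
    (hκ1 : κ < 1) (hκ : κ ≤ (p - 1) / p * regularConst N p * (f / A)) (hm : Measurable φ)
    (h0 : ∀ x ∈ Ico (0 : ℝ) 1, 0 ≤ φ x) (hφf : ∫ x in Ico (0 : ℝ) 1, φ x = f)
    (hφF : ∫ x in Ico (0 : ℝ) 1, φ x ^ p = f * A ^ (p - 1)) :
    κ * A ^ p ≤ supMeas N p κ φ := by
  have : NeZero N := ⟨by lia⟩
  have hφ : Integrable φ unitMeasure := .of_integral_ne_zero (by rw [hφf]; exact hf.ne')
  have hφp : Integrable (fun x => φ x ^ p) unitMeasure :=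
    .of_integral_ne_zero (by rw [hφF]; positivity)
  obtain ⟨L, E, hE, hE1, rfl, hfL, hEL, hEcL⟩ :=
    exists_superlevel_adicMax hN hκ0 hκ1 hm hφ h0
  have hL : 0 < L := hf.trans_le (hφf ▸ hfL)
  refine le_trans ?_ (setIntegral_adicMax_rpow_le_supMeas hN hp hm hφ hφp h0 hE hE1)
  obtain hAL | hLA := le_total A L
  · rw [mul_comm]
    refine setIntegral_ge_of_const_le_real hE
      (measure_ne_top_of_subset hE1 measure_Ico_lt_top.ne)
      (fun x hx => Real.rpow_le_rpow hA.le (hAL.trans (hEL x hx)) (by linarith))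
      (IntegrableOn.mono_set (integrable_adicMax_rpow hN hp hm hφ hφp h0) hE1)
  · have main := le_setIntegral_adicMax_rpow hN hL hp hm hφ hφp h0 hfL hE hE1 hEL hEcL
    rw [hφf, hφF] at main
    linarith [mul_rpow_sub_rpow_le hp hf.le (regularConst_pos (Nat.one_lt_cast.2 hN) hp).le hL.le hA
      hLA hκ]

lemma setIntegral_indicator_Ico_const (hf : 0 ≤ f) (hA : 0 < A) (hfA : f ≤ A) (B : ℝ) :
    ∫ x in Ico (0 : ℝ) 1, (Ico 0 (f / A)).indicator (fun _ => B) x = f / A * B := by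
  have : f / A ≤ 1 := (div_le_one hA).2 hfA
  rw [setIntegral_indicator measurableSet_Ico, Ico_inter_Ico, setIntegral_const, smul_eq_mul,
    sup_idem, min_eq_right this, Real.volume_real_Ico_of_le (by positivity), sub_zero]

lemma exists_supMeas_le (hN : N ≠ 0) (hp : 1 < p) (hf : 0 ≤ f) (hA : 0 < A) (hfA : f ≤ A)
    (hκ : 0 ≤ κ) :
    ∃ φ : ℝ → ℝ, Measurable φ ∧ (∀ x ∈ Ico (0 : ℝ) 1, 0 ≤ φ x) ∧
      ∫ x in Ico (0 : ℝ) 1, φ x = f ∧ ∫ x in Ico (0 : ℝ) 1, φ x ^ p = f * A ^ (p - 1) ∧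
      supMeas N p κ φ ≤ κ * A ^ p := by
  refine ⟨(Ico 0 (f / A)).indicator fun _ => A, measurable_const.indicator measurableSet_Ico,
    fun x _ => indicator_nonneg (fun _ _ => hA.le) x, ?_, ?_,
    supMeas_le_of_abs_le hN (by linarith) hκ fun x => ?_⟩
  · rw [setIntegral_indicator_Ico_const hf hA hfA, div_mul_cancel₀ f hA.ne']
  · have rpow_indicator x : (Ico 0 (f / A)).indicator (fun _ => A) x ^ p
        = (Ico 0 (f / A)).indicator (fun _ => A ^ p) x := by
      by_cases hx : x ∈ Ico 0 (f / A)
      · simp only [indicator_of_mem hx]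
      · simp only [indicator_of_notMem hx, Real.zero_rpow (by linarith : p ≠ 0)]
    simp only [rpow_indicator]
    rw [setIntegral_indicator_Ico_const hf hA hfA, ← rpow_sub_one_mul_self hp hA.le]
    field_simp
  · rw [abs_of_nonneg (indicator_nonneg (fun _ _ => hA.le) x)]
    exact indicator_le_self' (fun _ _ => hA.le) x

lemma Dp_mul_rpow_sub_one (hN : 1 < N) (hp : 1 < p) (hf : 0 < f) (hfA : f ≤ A) (hκ0 : 0 < κ)
    (hκ : κ ≤ (p - 1) / p * regularConst N p * (f / A)) :
    Dp N p (f * A ^ (p - 1)) f κ = κ * A ^ p := by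
  have hA : 0 < A := hf.trans_le hfA
  have hκ1 : κ < 1 := by
    calc κ ≤ (p - 1) / p * regularConst N p * (f / A) := hκ
      _ < 1 * (f / A) := by
        have := mul_regularConst_lt_one (Nat.one_lt_cast.2 hN : (1 : ℝ) < N) hp
        gcongr
      _ ≤ 1 := by rw [one_mul]; exact (div_le_one hA).2 hfA
  obtain ⟨φ, hm, h0, hφf, hφF, hφA⟩ := exists_supMeas_le (by lia : N ≠ 0) hp hf.le hA hfA hκ0.le
  have lower : κ * A ^ p ∈ lowerBounds {y : ℝ | ∃ φ : ℝ → ℝ, Measurable φ ∧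
      (∀ x ∈ Ico (0 : ℝ) 1, 0 ≤ φ x) ∧ (∫ x in Ico (0 : ℝ) 1, φ x) = f ∧
      (∫ x in Ico (0 : ℝ) 1, φ x ^ p) = f * A ^ (p - 1) ∧ y = supMeas N p κ φ} := by
    rintro _ ⟨φ, hm, h0, hφf, hφF, rfl⟩
    exact mul_rpow_le_supMeas hN hp hf hA hκ0 hκ1 hκ hm h0 hφf hφF
  exact le_antisymm ((csInf_le ⟨_, lower⟩ ⟨φ, hm, h0, hφf, hφF, rfl⟩).trans hφA)
    (le_csInf ⟨_, φ, hm, h0, hφf, hφF, rfl⟩ lower)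

end Bellman

theorem stmt4 (N : ℕ) (hN : 2 ≤ N) (p f F κ c : ℝ) (hp : 1 < p)
    (hf : 0 < f) (hF : 0 < F) (hfF : f ^ p ≤ F)
    (hc : c = ((p - 1) / p) * (((N : ℝ) ^ p - 1) / ((N : ℝ) ^ p - N)))
    (hκ1 : 0 < κ) (hκ2 : κ ≤ c * (f ^ p / F) ^ (1 / (p - 1))) :
    Dp N p F f κ = κ * (F / f) ^ (p / (p - 1)) := by
  have hp1 : 0 < p - 1 := by linarith
  obtain ⟨A, hA, hAF⟩ : ∃ A, 0 < A ∧ A ^ (p - 1) = F / f :=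
    ⟨(F / f) ^ (p - 1)⁻¹, by positivity, Real.rpow_inv_rpow (by positivity) hp1.ne'⟩
  have hF_eq : F = f * A ^ (p - 1) := by rw [hAF]; field_simp
  have value : (F / f) ^ (p / (p - 1)) = A ^ p := by
    rw [← hAF, ← Real.rpow_mul hA.le, mul_div_cancel₀ _ hp1.ne']
  have ratio : f ^ p / F = (f / A) ^ (p - 1) := by
    rw [Real.div_rpow hf.le hA.le, hAF, ← rpow_sub_one_mul_self hp hf.le]
    field_simp
  have threshold : (f ^ p / F) ^ (1 / (p - 1)) = f / A := by
    rw [ratio, one_div, Real.rpow_rpow_inv (by positivity) hp1.ne']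
  have hfA : f ≤ A := by
    rw [← Real.rpow_le_rpow_iff hf.le hA.le hp1, hAF, le_div_iff₀ hf,
      rpow_sub_one_mul_self hp hf.le]
    exact hfF
  rw [threshold, hc] at hκ2
  rw [value, hF_eq]
  exact Dp_mul_rpow_sub_one hN hp hf hfA hκ1 hκ2
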